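/- Every exact-repair regenerating code with parameters (n,k,d) = (5,4,4) and secondary parameters (B,α,β) satisfies 5B ≤ 7α + 22β. -/

import Mathlib

open Finset

/-- Shannon entropy (base 2) of a finitely-valued random variable `X` on a finite
probability space with mass function `P`. -/
noncomputable def entH {Ω S : Type*} [Fintype Ω] (P : Ω → ℝ) (X : Ω → S) : ℝ :=
  letI := Classical.decEq S
  ∑ s ∈ Finset.univ.image X,
    -((∑ ω ∈ Finset.univ.filter (fun ω => X ω = s), P ω) *
       Real.logb 2 (∑ ω ∈ Finset.univ.filter (fun ω => X ω = s), P ω))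

/-- Conditional entropy `H(X | Y) = H(X, Y) - H(Y)`. -/
noncomputable def condH {Ω S T : Type*} [Fintype Ω] (P : Ω → ℝ) (X : Ω → S) (Y : Ω → T) : ℝ :=
  entH P (fun ω => (X ω, Y ω)) - entH P Y

/-- The joint random variable `W_J = (W_j : j ∈ J)`. -/
def jointW {Ω : Type*} {n : ℕ} {σW : Fin n → Type*} (W : ∀ j, Ω → σW j)
    (J : Finset (Fin n)) : Ω → ∀ j : J, σW j.1 :=
  fun ω j => W j.1 ω

/-- The joint random variable `(S_i^j : (i,j) ∈ E)` for a set `E` of pairs. -/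
def jointS {Ω : Type*} {n : ℕ} {σS : Fin n → Fin n → Type*} (S : ∀ i j, Ω → σS i j)
    (E : Finset (Fin n × Fin n)) : Ω → ∀ e : E, σS e.1.1 e.1.2 :=
  fun ω e => S e.1.1 e.1.2 ω

/-- The joint random variable `S_I^j = (S_i^j : i ∈ I)`. -/
def jointSto {Ω : Type*} {n : ℕ} {σS : Fin n → Fin n → Type*} (S : ∀ i j, Ω → σS i j)
    (I : Finset (Fin n)) (j : Fin n) : Ω → ∀ i : I, σS i.1 j :=
  fun ω i => S i.1 j ω

/-- An exact-repair regenerating code with parameters `(n,k,d)` (with `1 ≤ k ≤ d ≤ n-1`)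
and secondary parameters `(B,α,β)`: the file `M`, the stored data `W j` on server `j`
(servers indexed by `Fin n`, server `j` of the paper being index `j-1`), and the helper
information `S i j` sent from server `i` to repair server `j`. -/
structure IsRegenCode {Ω : Type*} [Fintype Ω] (n k d : ℕ) (B α β : ℝ) (P : Ω → ℝ)
    {σM : Type*} {σW : Fin n → Type*} {σS : Fin n → Fin n → Type*}
    (M : Ω → σM) (W : ∀ j, Ω → σW j) (S : ∀ i j, Ω → σS i j) : Prop where
  prob_nonneg : ∀ ω, 0 ≤ P ω
  prob_sum : ∑ ω, P ω = 1
  hk : 1 ≤ k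
  hkd : k ≤ d
  hdn : d + 1 ≤ n
  hB : 0 ≤ B
  hα : 0 ≤ α
  hβ : 0 ≤ β
  hMB : entH P M = B
  hWα : ∀ j, entH P (W j) = α
  hWM : ∀ j, condH P (W j) M = 0
  hMW : ∀ J : Finset (Fin n), k ≤ J.card → condH P M (jointW W J) = 0
  hSβ : ∀ i j, i ≠ j → entH P (S i j) = β
  hSW : ∀ i j, i ≠ j → condH P (S i j) (W i) = 0
  hWS : ∀ (j : Fin n) (I : Finset (Fin n)), d ≤ I.card → j ∉ I →
    condH P (W j) (jointSto S I j) = 0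

/-- `B_q = qα + ((k-q)(k-q-1)/2)β + (d+1-k)(k-q)β`. -/
noncomputable def Bfun (k d q : ℕ) (α β : ℝ) : ℝ :=
  (q : ℝ) * α + (((k - q) * (k - q - 1) : ℕ) : ℝ) / 2 * β
    + (((d + 1 - k) * (k - q) : ℕ) : ℝ) * β

/-!
Random variables enter through their level-set partitions, and the only property of entropy that is
needed is submodularity. Fix disjoint sets of nodes `A` and `R` with `#A = q + 1`, `#A + #R = k`, a
further node `z`, and a node `w` of `R`. Repairing the nodes of `R \ {w}` one after another from `A`
yields a transcript `t`, free of messages from `z`, such that `W_A`, `t` and the messages from `z`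
to `R \ {w}` determine the nodes of `R \ {w}`.

Rebuild `W_A` twice, once with the message from `z` to `a ∈ A` and once with that to `b ∈ A`, and
glue the two along `(W_A, t)`. One side of the submodular inequality contains `S_z^{a,b}`, so that
adjoining `W_z` decodes the file at the price `α - H(S_z^{a,b})`; the other side, `(W_A, t)`,
decodes the file once the messages from `z` to `R` and `d - k` further messages to `w` are added.
For a pair `U ⊆ A` and a pair `V ⊆ R` this gives
`2B + β + H(S_z^U) ≤ B_q + B_{q+1} + H(S_z^V)`. Exchanging `U` and `V` gives the same bound with the
two pair entropies swapped, whence `2B + β ≤ B_q + B_{q+1}`. Twice this plus the cut-set bound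
`B ≤ B_q` gives, for `q = 1`, the theorem.
-/

section Partition

variable {Ω : Type*}

/-- The partition of the joint random variable `(X i : i ∈ I)`. -/
def jointPartition {ι : Type*} {σ : ι → Type*} (X : ∀ i, Ω → σ i) (I : Finset ι) : Setoid Ω :=
  I.inf fun i => Setoid.ker (X i)

section JointPartition

variable {ι : Type*} {σ : ι → Type*} (X : ∀ i, Ω → σ i)

theorem jointPartition_le_ker {I : Finset ι} {i : ι} (hi : i ∈ I) :
    jointPartition X I ≤ Setoid.ker (X i) :=
  inf_le hi

theorem jointPartition_anti {I J : Finset ι} (h : I ⊆ J) :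
    jointPartition X J ≤ jointPartition X I :=
  inf_mono h

theorem jointPartition_insert [DecidableEq ι] (i : ι) (I : Finset ι) :
    jointPartition X (insert i I) = Setoid.ker (X i) ⊓ jointPartition X I :=
  inf_insert

theorem jointPartition_union [DecidableEq ι] (I J : Finset ι) :
    jointPartition X (I ∪ J) = jointPartition X I ⊓ jointPartition X J :=
  inf_union

theorem ker_restrict_eq_jointPartition (I : Finset ι) :
    Setoid.ker (fun ω (i : I) => X i ω) = jointPartition X I := by
  refine le_antisymm (Finset.le_inf fun i hi ω ω' h => congrFun h ⟨i, hi⟩) fun ω ω' h => ?_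
  exact funext fun i => jointPartition_le_ker X i.2 h

end JointPartition

variable [Fintype Ω] {P : Ω → ℝ} {r s t : Setoid Ω}

open Classical in
/-- The mass of the class of `ω` in the partition `r`. -/
noncomputable def cellMass (P : Ω → ℝ) (r : Setoid Ω) (ω : Ω) : ℝ :=
  ∑ ω' with r ω ω', P ω'

/-- The entropy (base 2) of a partition of the probability space. A random variable `X` enters
through the partition `Setoid.ker X` into its level sets, so that `r ⊓ s` is the joint variable
and `r ≤ s` says that `s` is a function of `r`. -/
noncomputable def partitionEntropy (P : Ω → ℝ) (r : Setoid Ω) : ℝ :=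
  -∑ ω, P ω * Real.logb 2 (cellMass P r ω)

theorem entH_eq_partitionEntropy_ker {α : Type*} (P : Ω → ℝ) (X : Ω → α) :
    entH P X = partitionEntropy P (Setoid.ker X) := by
  classical
  rw [entH, partitionEntropy, sum_neg_distrib, neg_inj,
    ← sum_fiberwise_of_maps_to fun ω _ => mem_image_of_mem X (mem_univ ω)]
  refine sum_congr (by congr) fun x _ => ?_
  rw [sum_mul]
  refine sum_congr (by congr) fun ω hω => ?_
  obtain rfl : X ω = x := (mem_filter.mp hω).2
  simp only [cellMass, Setoid.ker_def, eq_comm]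

theorem cellMass_congr {ω ω' : Ω} (h : r ω ω') : cellMass P r ω = cellMass P r ω' := by
  classical
  refine sum_congr (filter_congr fun z _ => ?_) fun _ _ => rfl
  exact ⟨r.trans (r.symm h), r.trans h⟩

theorem cellMass_mono (hP : ∀ ω, 0 ≤ P ω) (h : r ≤ s) (ω : Ω) :
    cellMass P r ω ≤ cellMass P s ω := by
  classical
  exact sum_le_sum_of_subset_of_nonneg (monotone_filter_right _ fun _ _ hω => h hω)
    fun ω' _ _ => hP ω'

theorem le_cellMass (hP : ∀ ω, 0 ≤ P ω) (r : Setoid Ω) (ω : Ω) : P ω ≤ cellMass P r ω := by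
  classical
  exact single_le_sum (fun ω' _ => hP ω') (mem_filter.mpr ⟨mem_univ ω, r.refl ω⟩)

theorem cellMass_nonneg (hP : ∀ ω, 0 ≤ P ω) (r : Setoid Ω) (ω : Ω) : 0 ≤ cellMass P r ω :=
  (hP ω).trans (le_cellMass hP r ω)

theorem partitionEntropy_top (hsum : ∑ ω, P ω = 1) : partitionEntropy P ⊤ = 0 := by
  simp [partitionEntropy, cellMass, Setoid.top_def, hsum]

theorem partitionEntropy_anti (hP : ∀ ω, 0 ≤ P ω) (h : r ≤ s) :
    partitionEntropy P s ≤ partitionEntropy P r := by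
  refine neg_le_neg (sum_le_sum fun ω _ => ?_)
  rcases (hP ω).eq_or_lt with hω | hω
  · simp [← hω]
  · exact mul_le_mul_of_nonneg_left (Real.logb_le_logb_of_le one_lt_two
      (hω.trans_le (le_cellMass hP r ω)) (cellMass_mono hP h ω)) hω.le

theorem sum_div_cellMass_le_one (hP : ∀ ω, 0 ≤ P ω) {C : Finset Ω}
    (hC : ∀ ω ∈ C, ∀ ω' ∈ C, r ω ω') : ∑ ω ∈ C, P ω / cellMass P r ω ≤ 1 := by
  classical
  obtain rfl | ⟨ω₀, hω₀⟩ := C.eq_empty_or_nonempty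
  · simp
  calc ∑ ω ∈ C, P ω / cellMass P r ω
      = (∑ ω ∈ C, P ω) / cellMass P r ω₀ := by
        rw [sum_div]
        exact sum_congr rfl fun ω hω => by rw [cellMass_congr (hC ω hω ω₀ hω₀)]
    _ ≤ cellMass P r ω₀ / cellMass P r ω₀ := by
        refine div_le_div_of_nonneg_right ?_ (cellMass_nonneg hP r ω₀)
        exact sum_le_sum_of_subset_of_nonneg
          (fun ω hω => mem_filter.mpr ⟨mem_univ ω, hC ω₀ hω₀ ω hω⟩) fun ω _ _ => hP ω
    _ ≤ 1 := div_self_le_one _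

open Classical in
/-- Up to null classes, the left side is the total mass of the `r`-classes that meet the
`s`-class of `ω₀`; all of these lie in the `t`-class of `ω₀`. -/
theorem sum_mul_cellMass_div_cellMass_inf_le (hP : ∀ ω, 0 ≤ P ω) (hr : r ≤ t) (hs : s ≤ t)
    (ω₀ : Ω) :
    ∑ ω with s ω₀ ω, P ω / cellMass P (r ⊓ s) ω * cellMass P r ω ≤ cellMass P t ω₀ := by
  calc ∑ ω with s ω₀ ω, P ω / cellMass P (r ⊓ s) ω * cellMass P r ω
      = ∑ ω₁, ∑ ω with s ω₀ ω ∧ r ω ω₁, P ω / cellMass P (r ⊓ s) ω * P ω₁ := by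
        simp only [cellMass, mul_sum]
        exact sum_comm' (by simp)
    _ ≤ ∑ ω₁, if t ω₀ ω₁ then P ω₁ else 0 := by
        refine sum_le_sum fun ω₁ _ => ?_
        rw [← sum_mul]
        split_ifs with ht
        · refine mul_le_of_le_one_left (hP ω₁) (sum_div_cellMass_le_one hP fun ω hω ω' hω' => ?_)
          obtain ⟨hsω, hrω⟩ := (mem_filter.mp hω).2
          obtain ⟨hsω', hrω'⟩ := (mem_filter.mp hω').2
          exact ⟨r.trans hrω (r.symm hrω'), s.trans (s.symm hsω) hsω'⟩
        · rw [filter_false_of_mem fun ω _ hω => ht (t.trans (hs hω.1) (hr hω.2)), sum_empty,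
            zero_mul]
    _ = cellMass P t ω₀ := (sum_filter _ _).symm

theorem sum_mul_cellMass_ratio_le (hP : ∀ ω, 0 ≤ P ω) (hr : r ≤ t) (hs : s ≤ t) :
    ∑ ω, P ω * (cellMass P r ω * cellMass P s ω / (cellMass P (r ⊓ s) ω * cellMass P t ω))
      ≤ ∑ ω, P ω := by
  classical
  calc ∑ ω, P ω * (cellMass P r ω * cellMass P s ω / (cellMass P (r ⊓ s) ω * cellMass P t ω))
      = ∑ ω₀, P ω₀ / cellMass P t ω₀ *
          ∑ ω with s ω₀ ω, P ω / cellMass P (r ⊓ s) ω * cellMass P r ω := by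
        simp only [mul_sum]
        rw [sum_comm' (t' := univ) (s' := fun ω => {ω₀ | s ω ω₀}) (by simp [s.comm'])]
        refine sum_congr rfl fun ω _ => ?_
        have swap : ∀ ω₀ ∈ ({ω₀ | s ω ω₀} : Finset Ω),
            P ω₀ / cellMass P t ω₀ * (P ω / cellMass P (r ⊓ s) ω * cellMass P r ω)
              = P ω₀ * (P ω * cellMass P r ω / (cellMass P (r ⊓ s) ω * cellMass P t ω)) := by
          intro ω₀ hω₀
          rw [cellMass_congr (hs (mem_filter.mp hω₀).2)]
          ring
        rw [sum_congr rfl swap, ← sum_mul, ← cellMass]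
        ring
    _ ≤ ∑ ω₀, P ω₀ / cellMass P t ω₀ * cellMass P t ω₀ := by
        refine sum_le_sum fun ω₀ _ => mul_le_mul_of_nonneg_left
          (sum_mul_cellMass_div_cellMass_inf_le hP hr hs ω₀) ?_
        exact div_nonneg (hP ω₀) (cellMass_nonneg hP t ω₀)
    _ ≤ ∑ ω, P ω := by
        refine sum_le_sum fun ω _ => ?_
        rw [div_mul_eq_mul_div, mul_div_assoc]
        exact mul_le_of_le_one_right (hP ω) (div_self_le_one _)

theorem sum_mul_log_le {ι : Type*} {I : Finset ι} {p x : ι → ℝ} (hp : ∀ i ∈ I, 0 ≤ p i)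
    (hx : ∀ i ∈ I, 0 < p i → 0 < x i) :
    ∑ i ∈ I, p i * Real.log (x i) ≤ ∑ i ∈ I, p i * x i - ∑ i ∈ I, p i := by
  rw [← sum_sub_distrib]
  refine sum_le_sum fun i hi => ?_
  rcases (hp i hi).eq_or_lt with h | h
  · simp [← h]
  · linarith [mul_le_mul_of_nonneg_left (Real.log_le_sub_one_of_pos (hx i hi h)) h.le]

theorem partitionEntropy_submodular (hP : ∀ ω, 0 ≤ P ω) (hr : r ≤ t) (hs : s ≤ t) :
    partitionEntropy P (r ⊓ s) + partitionEntropy P t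
      ≤ partitionEntropy P r + partitionEntropy P s := by
  let ratio : Ω → ℝ := fun ω =>
    cellMass P r ω * cellMass P s ω / (cellMass P (r ⊓ s) ω * cellMass P t ω)
  have pos : ∀ ω, 0 < P ω → ∀ q, 0 < cellMass P q ω := fun ω hω q =>
    hω.trans_le (le_cellMass hP q ω)
  have log_ratio_sum_nonpos : ∑ ω, P ω * Real.log (ratio ω) ≤ 0 :=
    (sum_mul_log_le (fun ω _ => hP ω) fun ω _ hω => div_pos
      (mul_pos (pos ω hω r) (pos ω hω s)) (mul_pos (pos ω hω (r ⊓ s)) (pos ω hω t))).trans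
      (sub_nonpos.mpr (sum_mul_cellMass_ratio_le hP hr hs))
  have entropy_defect : partitionEntropy P (r ⊓ s) + partitionEntropy P t
      - (partitionEntropy P r + partitionEntropy P s)
      = (∑ ω, P ω * Real.log (ratio ω)) / Real.log 2 := by
    simp only [partitionEntropy, Real.logb, sum_div, ← sum_neg_distrib, ← sum_add_distrib,
      ← sum_sub_distrib]
    refine sum_congr rfl fun ω _ => ?_
    rcases (hP ω).eq_or_lt with hω | hω
    · simp [← hω]
    · have pos := pos ω hω
      rw [Real.log_div (mul_pos (pos r) (pos s)).ne' (mul_pos (pos _) (pos t)).ne',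
        Real.log_mul (pos r).ne' (pos s).ne', Real.log_mul (pos _).ne' (pos t).ne']
      ring
  exact sub_nonpos.mp (entropy_defect.trans_le
    (div_nonpos_of_nonpos_of_nonneg log_ratio_sum_nonpos (Real.log_nonneg one_le_two)))

theorem partitionEntropy_inf_le (hP : ∀ ω, 0 ≤ P ω) (hsum : ∑ ω, P ω = 1) (r s : Setoid Ω) :
    partitionEntropy P (r ⊓ s) ≤ partitionEntropy P r + partitionEntropy P s := by
  simpa only [partitionEntropy_top hsum, add_zero] using
    partitionEntropy_submodular hP (le_top : r ≤ ⊤) (le_top : s ≤ ⊤)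

theorem partitionEntropy_jointPartition_le_card_mul (hP : ∀ ω, 0 ≤ P ω) (hsum : ∑ ω, P ω = 1)
    {ι : Type*} {σ : ι → Type*} {X : ∀ i, Ω → σ i} {I : Finset ι} {c : ℝ}
    (h : ∀ i ∈ I, partitionEntropy P (Setoid.ker (X i)) ≤ c) :
    partitionEntropy P (jointPartition X I) ≤ #I * c := by
  classical
  induction I using Finset.induction_on with
  | empty => simp [jointPartition, partitionEntropy_top hsum]
  | insert i I hi ih =>
    rw [forall_mem_insert] at h
    rw [jointPartition_insert, card_insert_of_notMem hi, Nat.cast_succ]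
    linarith [partitionEntropy_inf_le hP hsum (Setoid.ker (X i)) (jointPartition X I), ih h.2, h.1]

/-- The partition `s` is almost surely a function of the partition `r`, that is, `H(s | r) = 0`. -/
def Determines (P : Ω → ℝ) (r s : Setoid Ω) : Prop :=
  partitionEntropy P (r ⊓ s) = partitionEntropy P r

namespace Determines

theorem of_le (h : r ≤ s) : Determines P r s := by
  rw [Determines, inf_eq_left.mpr h]

theorem of_condH_eq_zero {α β : Type*} {X : Ω → α} {Y : Ω → β} (h : condH P X Y = 0) :
    Determines P (Setoid.ker Y) (Setoid.ker X) := by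
  have ker_prod : Setoid.ker (fun ω => (X ω, Y ω)) = Setoid.ker Y ⊓ Setoid.ker X := by
    ext ω ω'
    simp [Setoid.ker_def, Setoid.inf_def, and_comm]
  rwa [condH, entH_eq_partitionEntropy_ker, entH_eq_partitionEntropy_ker, ker_prod,
    sub_eq_zero] at h

theorem entropy_le (hP : ∀ ω, 0 ≤ P ω) (h : Determines P r s) :
    partitionEntropy P s ≤ partitionEntropy P r :=
  (partitionEntropy_anti hP inf_le_right).trans_eq h

theorem entropy_submodular (hP : ∀ ω, 0 ≤ P ω) (hr : Determines P r t) (hs : Determines P s t) :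
    partitionEntropy P (r ⊓ s) + partitionEntropy P t
      ≤ partitionEntropy P r + partitionEntropy P s := by
  rw [← hr, ← hs]
  refine le_trans ?_ (partitionEntropy_submodular hP inf_le_right inf_le_right)
  gcongr
  exact partitionEntropy_anti hP (inf_le_inf inf_le_left inf_le_left)

theorem trans (hP : ∀ ω, 0 ≤ P ω) (hrs : Determines P r s) (hst : Determines P s t) :
    Determines P r t := by
  refine le_antisymm ?_ (partitionEntropy_anti hP inf_le_left)
  have anti := partitionEntropy_anti hP (inf_le_inf_left r inf_le_right : r ⊓ (s ⊓ t) ≤ r ⊓ t)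
  have submod := hrs.entropy_submodular hP (of_le (inf_le_left : s ⊓ t ≤ s))
  rw [hst] at submod
  linarith

theorem of_le_left (hP : ∀ ω, 0 ≤ P ω) (h : r ≤ s) (hst : Determines P s t) : Determines P r t :=
  (of_le h).trans hP hst

theorem inf (hP : ∀ ω, 0 ≤ P ω) (hs : Determines P r s) (ht : Determines P r t) :
    Determines P r (s ⊓ t) := by
  refine le_antisymm ?_ (partitionEntropy_anti hP inf_le_left)
  have submod := partitionEntropy_submodular hP (inf_le_left : r ⊓ s ≤ r) (inf_le_left : r ⊓ t ≤ r)
  rw [hs, ht, ← inf_inf_distrib_left] at submod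
  linarith

theorem jointPartition (hP : ∀ ω, 0 ≤ P ω) {ι : Type*} {σ : ι → Type*} {X : ∀ i, Ω → σ i}
    {I : Finset ι} (h : ∀ i ∈ I, Determines P r (Setoid.ker (X i))) :
    Determines P r (jointPartition X I) := by
  classical
  induction I using Finset.induction_on with
  | empty => exact of_le le_top
  | insert i I _ ih =>
    rw [forall_mem_insert] at h
    rw [jointPartition_insert]
    exact h.1.inf hP (ih h.2)

end Determines

end Partition

theorem Bfun_eq {k d q : ℕ} (hq : q ≤ k) (hkd : k ≤ d) (α β : ℝ) :
    Bfun k d q α β =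
      q * α + ((k - q) * (k - q - 1) / 2 + (d + 1 - k) * (k - q) : ℝ) * β := by
  obtain ⟨p, rfl⟩ := Nat.exists_eq_add_of_le hq
  obtain ⟨m, rfl⟩ := Nat.exists_eq_add_of_le hkd
  have hm : q + p + m + 1 - (q + p) = m + 1 := by lia
  have hp : ((p * (p - 1) : ℕ) : ℝ) = p * (p - 1) := by cases p <;> simp
  rw [Bfun, Nat.add_sub_cancel_left, hm, hp]
  push_cast
  ring

theorem exists_disjoint_card_eq_and_notMem {ι : Type*} [Fintype ι] {a b : ℕ}
    (h : a + b < Fintype.card ι) :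
    ∃ (A R : Finset ι) (z : ι), #A = a ∧ #R = b ∧ Disjoint A R ∧ z ∉ A ∧ z ∉ R := by
  classical
  obtain ⟨A, -, hA⟩ := exists_subset_card_eq (s := (univ : Finset ι)) (n := a)
    (by rw [card_univ]; lia)
  obtain ⟨R, hRA, hR⟩ := exists_subset_card_eq (s := Aᶜ) (n := b) (by rw [card_compl]; lia)
  have hAR : Disjoint A R := disjoint_right.mpr fun i hi => mem_compl.mp (hRA hi)
  obtain ⟨z, -, hz⟩ := exists_mem_notMem_of_card_lt_card (s := A ∪ R) (t := univ)
    (by rw [card_union_of_disjoint hAR, card_univ]; lia)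
  exact ⟨A, R, z, hA, hR, hAR, notMem_union.mp hz⟩

namespace IsRegenCode

variable {Ω : Type*} [Fintype Ω] {n k d : ℕ} {B α β : ℝ} {P : Ω → ℝ} {σM : Type*}
  {σW : Fin n → Type*} {σS : Fin n → Fin n → Type*} {M : Ω → σM} {W : ∀ j, Ω → σW j}
  {S : ∀ i j, Ω → σS i j}

theorem entropy_node (hcode : IsRegenCode n k d B α β P M W S) (j : Fin n) :
    partitionEntropy P (Setoid.ker (W j)) = α := by
  rw [← entH_eq_partitionEntropy_ker, hcode.hWα]

theorem entropy_help (hcode : IsRegenCode n k d B α β P M W S) {i j : Fin n} (hij : i ≠ j) :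
    partitionEntropy P (Setoid.ker (S i j)) = β := by
  rw [← entH_eq_partitionEntropy_ker, hcode.hSβ i j hij]

theorem entropy_inf_le (hcode : IsRegenCode n k d B α β P M W S) (r s : Setoid Ω) :
    partitionEntropy P (r ⊓ s) ≤ partitionEntropy P r + partitionEntropy P s :=
  partitionEntropy_inf_le hcode.prob_nonneg hcode.prob_sum r s

theorem entropy_nodes_le (hcode : IsRegenCode n k d B α β P M W S) (A : Finset (Fin n)) :
    partitionEntropy P (jointPartition W A) ≤ #A * α :=
  partitionEntropy_jointPartition_le_card_mul hcode.prob_nonneg hcode.prob_sum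
    fun j _ => (hcode.entropy_node j).le

theorem entropy_help_from_le (hcode : IsRegenCode n k d B α β P M W S) {z : Fin n}
    {R : Finset (Fin n)} (hz : z ∉ R) :
    partitionEntropy P (jointPartition (S z) R) ≤ #R * β :=
  partitionEntropy_jointPartition_le_card_mul hcode.prob_nonneg hcode.prob_sum
    fun _ hj => (hcode.entropy_help (ne_of_mem_of_not_mem hj hz).symm).le

theorem entropy_help_to_le (hcode : IsRegenCode n k d B α β P M W S) {j : Fin n}
    {I : Finset (Fin n)} (hj : j ∉ I) :
    partitionEntropy P (jointPartition (fun i => S i j) I) ≤ #I * β :=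
  partitionEntropy_jointPartition_le_card_mul hcode.prob_nonneg hcode.prob_sum
    fun _ hi => (hcode.entropy_help (ne_of_mem_of_not_mem hi hj)).le

theorem determines_help (hcode : IsRegenCode n k d B α β P M W S) {r : Setoid Ω} {i j : Fin n}
    (hij : i ≠ j) (h : Determines P r (Setoid.ker (W i))) :
    Determines P r (Setoid.ker (S i j)) :=
  h.trans hcode.prob_nonneg (.of_condH_eq_zero (hcode.hSW i j hij))

theorem determines_node_of_mem (hcode : IsRegenCode n k d B α β P M W S) {r : Setoid Ω}
    {A : Finset (Fin n)} {j : Fin n} (hj : j ∈ A) (h : Determines P r (jointPartition W A)) :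
    Determines P r (Setoid.ker (W j)) :=
  h.trans hcode.prob_nonneg (.of_le (jointPartition_le_ker W hj))

theorem determines_repair (hcode : IsRegenCode n k d B α β P M W S) {r : Setoid Ω} {j : Fin n}
    {I : Finset (Fin n)} (hI : d ≤ #I) (hj : j ∉ I)
    (h : ∀ i ∈ I, Determines P r (Setoid.ker (S i j))) :
    Determines P r (Setoid.ker (W j)) := by
  have repair := Determines.of_condH_eq_zero (hcode.hWS j I hI hj)
  unfold jointSto at repair
  rw [ker_restrict_eq_jointPartition fun i => S i j] at repair
  exact (Determines.jointPartition hcode.prob_nonneg h).trans hcode.prob_nonneg repair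

theorem file_le_entropy (hcode : IsRegenCode n k d B α β P M W S) {r : Setoid Ω}
    {A : Finset (Fin n)} (hA : k ≤ #A) (h : ∀ j ∈ A, Determines P r (Setoid.ker (W j))) :
    B ≤ partitionEntropy P r := by
  have decode := Determines.of_condH_eq_zero (hcode.hMW A hA)
  unfold jointW at decode
  rw [ker_restrict_eq_jointPartition] at decode
  rw [← hcode.hMB, entH_eq_partitionEntropy_ker]
  exact ((Determines.jointPartition hcode.prob_nonneg h).trans hcode.prob_nonneg decode).entropy_le
    hcode.prob_nonneg

/-- The messages repairing `j` that come neither from `A` nor from `z`. The sender `z` is singled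
out because its message is charged elsewhere: either to `S z` alone or to the node `z` itself. -/
theorem exists_node_transcript (hcode : IsRegenCode n k d B α β P M W S) {A : Finset (Fin n)}
    {j z : Fin n} (hjA : j ∉ A) (hzA : z ∉ A) (hzj : z ≠ j) (hAd : #A + 1 ≤ d) :
    ∃ t, partitionEntropy P t ≤ (d - (#A + 1)) * β ∧
      Determines P (jointPartition W A ⊓ t ⊓ Setoid.ker (S z j)) (Setoid.ker (W j)) := by
  let U := insert z (insert j A)
  have hU : #U = #A + 2 := by
    rw [card_insert_of_notMem (by simp [hzj, hzA]), card_insert_of_notMem hjA]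
  obtain ⟨I, hIU, hI⟩ : ∃ I ⊆ Uᶜ, #I = d - (#A + 1) :=
    exists_subset_card_eq (by rw [card_compl, Fintype.card_fin, hU]; have := hcode.hdn; lia)
  have notMem_I : ∀ {i}, i ∈ U → i ∉ I := fun hi hiI => mem_compl.mp (hIU hiI) hi
  have hjI : j ∉ I := notMem_I (by simp [U])
  have hzI : z ∉ I := notMem_I (mem_insert_self _ _)
  have hAI : Disjoint A I := disjoint_left.mpr fun i hi => notMem_I (by simp [U, hi])
  refine ⟨jointPartition (fun i => S i j) I, ?_, ?_⟩
  · have := hcode.entropy_help_to_le hjI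
    rwa [hI, Nat.cast_sub hAd, Nat.cast_succ] at this
  · refine hcode.determines_repair (I := insert z (A ∪ I)) ?_ (by simp [hzj.symm, hjA, hjI]) ?_
    · rw [card_insert_of_notMem (by simp [hzA, hzI]), card_union_of_disjoint hAI, hI]
      lia
    simp only [forall_mem_insert, mem_union]
    refine ⟨.of_le inf_le_right, fun i hi => hi.elim (fun hiA => ?_) fun hiI => .of_le ?_⟩
    · refine hcode.determines_help (ne_of_mem_of_not_mem hiA hjA) (.of_le ?_)
      exact (inf_le_left.trans inf_le_left).trans (jointPartition_le_ker W hiA)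
    · exact (inf_le_left.trans inf_le_right).trans
        (jointPartition_le_ker (fun i => S i j) hiI)

theorem exists_transcript (hcode : IsRegenCode n k d B α β P M W S) {A R : Finset (Fin n)}
    {z : Fin n} (hAR : Disjoint A R) (hzA : z ∉ A) (hzR : z ∉ R) (hARd : #A + #R ≤ d) :
    ∃ t, partitionEntropy P t ≤ (#R * (d - 1 - #A) - #R * (#R - 1) / 2 : ℝ) * β ∧
      Determines P (jointPartition W A ⊓ t ⊓ jointPartition (S z) R) (jointPartition W R) := by
  have hP := hcode.prob_nonneg
  induction R using Finset.induction_on with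
  | empty => exact ⟨⊤, by simp [partitionEntropy_top hcode.prob_sum], .of_le le_top⟩
  | insert j R hj ih =>
    rw [disjoint_insert_right] at hAR
    rw [mem_insert, not_or] at hzR
    rw [card_insert_of_notMem hj] at hARd ⊢
    obtain ⟨t₁, entropy_t₁, rebuild_R⟩ := ih hAR.2 hzR.2 (by lia)
    have hcard : #(A ∪ R) = #A + #R := card_union_of_disjoint hAR.2
    obtain ⟨t₂, entropy_t₂, rebuild_j⟩ := hcode.exists_node_transcript (A := A ∪ R) (j := j)
      (z := z) (by simp [hAR.1, hj]) (by simp [hzA, hzR.2]) hzR.1 (by lia)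
    refine ⟨t₁ ⊓ t₂, ?_, ?_⟩
    · rw [hcard] at entropy_t₂
      have subadd := hcode.entropy_inf_le t₁ t₂
      push_cast at entropy_t₂ ⊢
      linarith
    · let r := jointPartition W A ⊓ (t₁ ⊓ t₂) ⊓ jointPartition (S z) (insert j R)
      have known_R : Determines P r (jointPartition W R) := rebuild_R.of_le_left hP
        (inf_le_inf (inf_le_inf_left _ inf_le_left) (jointPartition_anti (S z) (subset_insert j R)))
      have known_AR : Determines P r (jointPartition W (A ∪ R)) := by
        rw [jointPartition_union]
        exact .inf hP (.of_le (inf_le_left.trans inf_le_left)) known_R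
      have known_j : Determines P r (Setoid.ker (W j)) := by
        have known_t₂ : Determines P r t₂ :=
          .of_le ((inf_le_left.trans inf_le_right).trans inf_le_right)
        have known_help : Determines P r (Setoid.ker (S z j)) :=
          .of_le (inf_le_right.trans (jointPartition_le_ker (S z) (mem_insert_self j R)))
        exact ((known_AR.inf hP known_t₂).inf hP known_help).trans hP rebuild_j
      rw [jointPartition_insert W]
      exact known_j.inf hP known_R

theorem file_le_Bfun (hcode : IsRegenCode n k d B α β P M W S) {q : ℕ} (hq : q ≤ k) :
    B ≤ Bfun k d q α β := by
  have := hcode.hkd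
  have := hcode.hdn
  obtain ⟨A, R, z, hA, hR, hAR, hzA, hzR⟩ :=
    exists_disjoint_card_eq_and_notMem (ι := Fin n) (a := q) (b := k - q)
      (by rw [Fintype.card_fin]; lia)
  have hcard : #(A ∪ R) = k := by rw [card_union_of_disjoint hAR]; lia
  obtain ⟨t, entropy_t, rebuild_R⟩ := hcode.exists_transcript hAR hzA hzR (by lia)
  let r := jointPartition W A ⊓ t ⊓ jointPartition (S z) R
  have file_le : B ≤ partitionEntropy P r := by
    refine hcode.file_le_entropy hcard.ge fun j hj => ?_
    rcases mem_union.mp hj with hj | hj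
    · exact .of_le ((inf_le_left.trans inf_le_left).trans (jointPartition_le_ker W hj))
    · exact hcode.determines_node_of_mem hj rebuild_R
  have entropy_W := hcode.entropy_nodes_le A
  have entropy_S := hcode.entropy_help_from_le hzR
  have subadd := hcode.entropy_inf_le (jointPartition W A ⊓ t) (jointPartition (S z) R)
  have subadd' := hcode.entropy_inf_le (jointPartition W A) t
  rw [Bfun_eq hq hcode.hkd]
  rw [hA] at entropy_t entropy_W
  rw [hR, Nat.cast_sub hq] at entropy_t entropy_S
  linarith

theorem exists_rebuild (hcode : IsRegenCode n k d B α β P M W S) {A : Finset (Fin n)} {a z : Fin n}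
    (ha : a ∈ A) (hz : z ∉ A) (hAd : #A ≤ d) :
    ∃ x, partitionEntropy P x ≤ (#A - 1) * α + (d + 1 - #A) * β ∧
      Determines P x (jointPartition W A) ∧ Determines P x (Setoid.ker (S z a)) := by
  have hP := hcode.prob_nonneg
  have hza : z ≠ a := (ne_of_mem_of_not_mem ha hz).symm
  have hcard : #(A.erase a) + 1 = #A := card_erase_add_one ha
  obtain ⟨t, entropy_t, rebuild_a⟩ := hcode.exists_node_transcript (notMem_erase a A)
    (fun h => hz (mem_of_mem_erase h)) hza (hcard.trans_le hAd)
  refine ⟨jointPartition W (A.erase a) ⊓ t ⊓ Setoid.ker (S z a), ?_, ?_, .of_le inf_le_right⟩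
  · have entropy_W := hcode.entropy_nodes_le (A.erase a)
    have subadd := hcode.entropy_inf_le (jointPartition W (A.erase a) ⊓ t) (Setoid.ker (S z a))
    have subadd' := hcode.entropy_inf_le (jointPartition W (A.erase a)) t
    rw [hcode.entropy_help hza] at subadd
    rw [← hcard]
    push_cast
    linarith
  · nth_rw 2 [← insert_erase ha]
    rw [jointPartition_insert]
    exact rebuild_a.inf hP (.of_le (inf_le_left.trans inf_le_left))

/-- Submodularity over `(W_A, t)` glues a rebuild of `W_A` that uses the message `z → a` to one that
uses `z → b`; the union `y` thus contains a pair of messages sent by `z`. -/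
theorem exists_double_rebuild (hcode : IsRegenCode n k d B α β P M W S) {A : Finset (Fin n)}
    {a b z : Fin n} (ha : a ∈ A) (hb : b ∈ A) (hz : z ∉ A) (hAd : #A ≤ d) (t : Setoid Ω) :
    ∃ y, Determines P y (jointPartition W A ⊓ t) ∧
      Determines P y (jointPartition (S z) {a, b}) ∧
      partitionEntropy P y + partitionEntropy P (jointPartition W A ⊓ t)
        ≤ 2 * ((#A - 1) * α + (d + 1 - #A) * β + partitionEntropy P t) := by
  have hP := hcode.prob_nonneg
  obtain ⟨x₁, entropy_x₁, nodes₁, help_a⟩ := hcode.exists_rebuild ha hz hAd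
  obtain ⟨x₂, entropy_x₂, nodes₂, help_b⟩ := hcode.exists_rebuild hb hz hAd
  have known₁ : Determines P (x₁ ⊓ t) (jointPartition W A ⊓ t) :=
    .inf hP (nodes₁.of_le_left hP inf_le_left) (.of_le inf_le_right)
  have known₂ : Determines P (x₂ ⊓ t) (jointPartition W A ⊓ t) :=
    .inf hP (nodes₂.of_le_left hP inf_le_left) (.of_le inf_le_right)
  have help_ab : Determines P (x₁ ⊓ t ⊓ (x₂ ⊓ t)) (jointPartition (S z) {a, b}) := by
    refine .jointPartition hP ?_
    simp only [forall_mem_insert, mem_singleton, forall_eq]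
    exact ⟨help_a.of_le_left hP (inf_le_left.trans inf_le_left),
      help_b.of_le_left hP (inf_le_right.trans inf_le_left)⟩
  refine ⟨x₁ ⊓ t ⊓ (x₂ ⊓ t), known₁.of_le_left hP inf_le_left, help_ab, ?_⟩
  linarith [known₁.entropy_submodular hP known₂, hcode.entropy_inf_le x₁ t,
    hcode.entropy_inf_le x₂ t]

/-- Adjoining the node `z` to `y` decodes the file, but since `y` already knows the function `u` of
`W z`, this costs only `α - H(u)`. -/
theorem file_add_entropy_le (hcode : IsRegenCode n k d B α β P M W S) {A R : Finset (Fin n)}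
    {z : Fin n} {t u y : Setoid Ω} (hAR : Disjoint A R) (hzA : z ∉ A) (hzR : z ∉ R)
    (hk : k ≤ #A + #R + 1) (hWu : Determines P (Setoid.ker (W z)) u) (hyu : Determines P y u)
    (hy : Determines P y (jointPartition W A ⊓ t))
    (rebuild : Determines P (jointPartition W A ⊓ t ⊓ jointPartition (S z) R)
      (jointPartition W R)) :
    B + partitionEntropy P u ≤ α + partitionEntropy P y := by
  have hP := hcode.prob_nonneg
  let r := Setoid.ker (W z) ⊓ y
  have known_z : Determines P r (Setoid.ker (W z)) := .of_le inf_le_left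
  have known_At : Determines P r (jointPartition W A ⊓ t) := hy.of_le_left hP inf_le_right
  have known_help : Determines P r (jointPartition (S z) R) := .jointPartition hP fun j hj =>
    hcode.determines_help (ne_of_mem_of_not_mem hj hzR).symm known_z
  have known_R : Determines P r (jointPartition W R) :=
    (known_At.inf hP known_help).trans hP rebuild
  have file_le : B ≤ partitionEntropy P r := by
    refine hcode.file_le_entropy (A := insert z (A ∪ R)) ?_ ?_
    · rw [card_insert_of_notMem (by simp [hzA, hzR]), card_union_of_disjoint hAR]
      lia
    simp only [forall_mem_insert, mem_union]
    refine ⟨known_z, fun j hj => hj.elim (fun hjA => ?_) fun hjR => ?_⟩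
    · exact hcode.determines_node_of_mem hjA (known_At.trans hP (.of_le inf_le_left))
    · exact hcode.determines_node_of_mem hjR known_R
  linarith [hWu.entropy_submodular hP hyu, hcode.entropy_node z]

theorem file_le_entropy_add_help (hcode : IsRegenCode n k d B α β P M W S)
    {A R : Finset (Fin n)} {w z : Fin n} {t : Setoid Ω} (hw : w ∉ R)
    (hAR : Disjoint A (insert w R)) (hzA : z ∉ A) (hzR : z ∉ insert w R)
    (hk : #A + #(insert w R) = k)
    (rebuild : Determines P (jointPartition W A ⊓ t ⊓ jointPartition (S z) R)
      (jointPartition W R)) :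
    B ≤ partitionEntropy P (jointPartition W A ⊓ t) + (d - k) * β
      + partitionEntropy P (jointPartition (S z) (insert w R)) := by
  have hP := hcode.prob_nonneg
  have hkd := hcode.hkd
  rw [disjoint_insert_right] at hAR
  rw [mem_insert, not_or] at hzR
  have hcard : #(A ∪ R) + 1 = k := by
    rw [card_union_of_disjoint hAR.2, ← hk, card_insert_of_notMem hw, add_assoc]
  obtain ⟨t', entropy_t', rebuild_w⟩ := hcode.exists_node_transcript (A := A ∪ R) (j := w) (z := z)
    (by simp [hAR.1, hw]) (by simp [hzA, hzR.2]) hzR.1 (by lia)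
  let r := jointPartition W A ⊓ t ⊓ t' ⊓ jointPartition (S z) (insert w R)
  have known_A : Determines P r (jointPartition W A) :=
    .of_le ((inf_le_left.trans inf_le_left).trans inf_le_left)
  have known_R : Determines P r (jointPartition W R) := rebuild.of_le_left hP
    (inf_le_inf inf_le_left (jointPartition_anti (S z) (subset_insert w R)))
  have known_AR : Determines P r (jointPartition W (A ∪ R)) := by
    rw [jointPartition_union]
    exact known_A.inf hP known_R
  have known_w : Determines P r (Setoid.ker (W w)) := by
    have known_t' : Determines P r t' := .of_le (inf_le_left.trans inf_le_right)
    have known_help : Determines P r (Setoid.ker (S z w)) :=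
      .of_le (inf_le_right.trans (jointPartition_le_ker (S z) (mem_insert_self w R)))
    exact ((known_AR.inf hP known_t').inf hP known_help).trans hP rebuild_w
  have file_le : B ≤ partitionEntropy P r := by
    refine hcode.file_le_entropy (A := insert w (A ∪ R)) ?_ ?_
    · rw [card_insert_of_notMem (by simp [hAR.1, hw]), hcard]
    rw [forall_mem_insert]
    exact ⟨known_w, fun j hj => hcode.determines_node_of_mem hj known_AR⟩
  have subadd := hcode.entropy_inf_le (jointPartition W A ⊓ t ⊓ t')
    (jointPartition (S z) (insert w R))
  have subadd' := hcode.entropy_inf_le (jointPartition W A ⊓ t) t'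
  rw [← Nat.cast_succ, Nat.succ_eq_add_one, hcard] at entropy_t'
  linarith

theorem two_mul_file_add_entropy_pair_le (hcode : IsRegenCode n k d B α β P M W S) {q : ℕ}
    {A R U : Finset (Fin n)} {z : Fin n} (hAR : Disjoint A R) (hzA : z ∉ A) (hzR : z ∉ R)
    (hA : #A = q + 1) (hk : #A + #R = k) (hR : R.Nonempty) (hUA : U ⊆ A) (hU : #U = 2) :
    2 * B + partitionEntropy P (jointPartition (S z) U) + (#R - 1) * β
      ≤ Bfun k d q α β + Bfun k d (q + 1) α β + partitionEntropy P (jointPartition (S z) R) := by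
  have hP := hcode.prob_nonneg
  have hkd := hcode.hkd
  obtain ⟨w, R, hw, rfl, -⟩ := card_eq_succ.mp (Nat.succ_pred hR.card_ne_zero).symm
  have hwR : #(insert w R) = #R + 1 := card_insert_of_notMem hw
  obtain ⟨a, b, -, rfl⟩ := card_eq_two.mp hU
  have ha : a ∈ A := hUA (by simp)
  have hb : b ∈ A := hUA (by simp)
  have hAR' : Disjoint A R := hAR.mono_right (subset_insert w R)
  have hzR' : z ∉ R := fun h => hzR (mem_insert_of_mem h)
  obtain ⟨t, entropy_t, rebuild⟩ := hcode.exists_transcript hAR' hzA hzR' (by lia)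
  obtain ⟨y, nodes_y, pair_y, entropy_y⟩ := hcode.exists_double_rebuild ha hb hzA (by lia) t
  have pair_z : Determines P (Setoid.ker (W z)) (jointPartition (S z) {a, b}) :=
    .jointPartition hP fun j hj => hcode.determines_help
      (ne_of_mem_of_not_mem (hUA hj) hzA).symm (.of_le le_rfl)
  have file_y := hcode.file_add_entropy_le hAR' hzA hzR' (by lia) pair_z pair_y nodes_y rebuild
  have file_t := hcode.file_le_entropy_add_help hw hAR hzA hzR hk rebuild
  obtain rfl : q + 1 + (#R + 1) = k := by rw [← hk, hA, hwR]
  rw [Bfun_eq (by lia) hkd, Bfun_eq (by lia) hkd, hwR]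
  rw [hA] at entropy_t entropy_y
  push_cast at entropy_t entropy_y file_t ⊢
  linarith

theorem entropy_help_from_le_add (hcode : IsRegenCode n k d B α β P M W S) {z : Fin n}
    {R V : Finset (Fin n)} (hz : z ∉ R) (hV : V ⊆ R) :
    partitionEntropy P (jointPartition (S z) R)
      ≤ (#R - #V) * β + partitionEntropy P (jointPartition (S z) V) := by
  have entropy_sdiff := hcode.entropy_help_from_le fun h => hz (sdiff_subset (t := V) h)
  rw [cast_card_sdiff hV] at entropy_sdiff
  have subadd := hcode.entropy_inf_le (jointPartition (S z) (R \ V)) (jointPartition (S z) V)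
  rw [← jointPartition_union, sdiff_union_of_subset hV] at subadd
  linarith

theorem two_mul_file_add_entropy_pair_le_pair (hcode : IsRegenCode n k d B α β P M W S) {q : ℕ}
    {A R U V : Finset (Fin n)} {z : Fin n} (hAR : Disjoint A R) (hzA : z ∉ A) (hzR : z ∉ R)
    (hA : #A = q + 1) (hk : #A + #R = k) (hUA : U ⊆ A) (hU : #U = 2) (hVR : V ⊆ R)
    (hV : #V = 2) :
    2 * B + β + partitionEntropy P (jointPartition (S z) U)
      ≤ Bfun k d q α β + Bfun k d (q + 1) α β + partitionEntropy P (jointPartition (S z) V) := by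
  have hR : R.Nonempty := (card_pos.mp (by lia : 0 < #V)).mono hVR
  have rebuild := hcode.two_mul_file_add_entropy_pair_le hAR hzA hzR hA hk hR hUA hU
  have split := hcode.entropy_help_from_le_add hzR hVR
  rw [hV] at split
  push_cast at split
  linarith

/-- Exchanging `U` and `V` between the two sides swaps the pair entropies of
`two_mul_file_add_entropy_pair_le_pair`, so they cancel in the sum of the two bounds. -/
theorem two_mul_file_add_le (hcode : IsRegenCode n k d B α β P M W S) {q : ℕ} (hq : 1 ≤ q)
    (hqk : q + 3 ≤ k) : 2 * B + β ≤ Bfun k d q α β + Bfun k d (q + 1) α β := by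
  have := hcode.hkd
  have := hcode.hdn
  obtain ⟨A, R, z, hA, hR, hAR, hzA, hzR⟩ :=
    exists_disjoint_card_eq_and_notMem (ι := Fin n) (a := q + 1) (b := k - (q + 1))
      (by rw [Fintype.card_fin]; lia)
  obtain ⟨U, hUA, hU⟩ := exists_subset_card_eq (show 2 ≤ #A by lia)
  obtain ⟨V, hVR, hV⟩ := exists_subset_card_eq (show 2 ≤ #R by lia)
  have card_swap : ∀ {A U V : Finset (Fin n)}, U ⊆ A → Disjoint A V → #U = #V →
      #(A \ U ∪ V) = #A := fun hUA hAV hUV => by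
    rw [card_union_of_disjoint (hAV.mono_left sdiff_subset), ← hUV, card_sdiff_add_card_eq_card hUA]
  have hA' := card_swap hUA (hAR.mono_right hVR) (hU.trans hV.symm)
  have hR' := card_swap hVR (hAR.symm.mono_right hUA) (hV.trans hU.symm)
  have exchange := hcode.two_mul_file_add_entropy_pair_le_pair hAR hzA hzR hA (by lia) hUA hU hVR hV
  have exchange' := hcode.two_mul_file_add_entropy_pair_le_pair
    (A := A \ U ∪ V) (R := R \ V ∪ U) (U := V) (V := U) (z := z) (q := q)
    (by rw [disjoint_left] at hAR ⊢; grind) (by grind) (by grind) (by lia) (by lia)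
    subset_union_right hV subset_union_right hU
  linarith

end IsRegenCode

theorem stmt_15_general {Ω : Type*} [Fintype Ω] {n k d : ℕ} {B α β : ℝ} {P : Ω → ℝ}
    {σM : Type*} {σW : Fin n → Type*} {σS : Fin n → Fin n → Type*}
    {M : Ω → σM} {W : ∀ j, Ω → σW j} {S : ∀ i j, Ω → σS i j}
    (hcode : IsRegenCode n k d B α β P M W S) {q : ℕ} (hq : 1 ≤ q) (hqk : q + 3 ≤ k) :
    5 * B + 2 * β ≤ 3 * Bfun k d q α β + 2 * Bfun k d (q + 1) α β := by
  linarith [hcode.two_mul_file_add_le hq hqk, hcode.file_le_Bfun (show q ≤ k by lia)]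

/-- every `(5,4,4)` exact-repair code satisfies `5B ≤ 7α + 22β`. -/
theorem stmt_15 {Ω : Type*} [Fintype Ω] {B α β : ℝ} {P : Ω → ℝ}
    {σM : Type*} {σW : Fin 5 → Type*} {σS : Fin 5 → Fin 5 → Type*}
    {M : Ω → σM} {W : ∀ j, Ω → σW j} {S : ∀ i j, Ω → σS i j}
    (hcode : IsRegenCode 5 4 4 B α β P M W S) :
    5 * B ≤ 7 * α + 22 * β := by
  have general := stmt_15_general hcode le_rfl le_rfl
  norm_num [Bfun] at general
  linarith
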